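/- arXiv:2605.15679 — 5 statements merged into one kernel-verified Lean document; each statement's English description precedes it below -/
import Mathlib

section
/- Let n be a natural number, let A be a symmetric real n×n matrix, and let U, Ũ : ℝⁿ → ℝ be differentiable functions with ∇Ũ(q) = A·∇U(q) for every q ∈ ℝⁿ. If q : ℝ → ℝⁿ is a twice differentiable curve satisfying q''(t) + ∇U(q(t)) = 0 for all t, then the energy function t ↦ (1/2)⟨A·q'(t), q'(t)⟩ + Ũ(q(t)) is constant on ℝ. -/
open Matrix RealInnerProductSpace

/-- Action of an `n × n` matrix on `EuclideanSpace ℝ (Fin n)` by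
matrix–vector multiplication (`Matrix.mulVec`). -/
noncomputable def mulVecE {n : ℕ} (A : Matrix (Fin n) (Fin n) ℝ)
    (v : EuclideanSpace ℝ (Fin n)) : EuclideanSpace ℝ (Fin n) :=
  (WithLp.equiv 2 (Fin n → ℝ)).symm (A.mulVec (WithLp.equiv 2 (Fin n → ℝ) v))

section Hilbert

variable {E : Type*} [NormedAddCommGroup E] [InnerProductSpace ℝ E] [CompleteSpace E]

theorem hasDerivAt_half_inner_apply_self {T : E →ₗ[ℝ] E} (hT : T.IsSymmetric)
    {v : ℝ → E} {a : E} {t : ℝ} (hv : HasDerivAt v a t) :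
    HasDerivAt (fun s ↦ (1 / 2 : ℝ) * ⟪T (v s), v s⟫) ⟪T a, v t⟫ t := by
  -- A symmetric operator on a Hilbert space is bounded (Hellinger–Toeplitz).
  let T' : E →L[ℝ] E := ⟨T, hT.continuous⟩
  have hTv : HasDerivAt (fun s ↦ T (v s)) (T a) t := T'.hasFDerivAt.comp_hasDerivAt t hv
  refine ((hTv.inner ℝ hv).const_mul (1 / 2 : ℝ)).congr_deriv ?_
  rw [hT (v t) a, real_inner_comm]
  ring

theorem hasDerivAt_comp_of_hasGradientAt {V : E → ℝ} {g : E} {q : ℝ → E} {v : E} {t : ℝ}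
    (hV : HasGradientAt V g (q t)) (hq : HasDerivAt q v t) :
    HasDerivAt (fun s ↦ V (q s)) ⟪g, v⟫ t :=
  hV.hasFDerivAt.comp_hasDerivAt t hq

theorem hasDerivAt_energy {T : E →ₗ[ℝ] E} (hT : T.IsSymmetric) {V : E → ℝ} {q v : ℝ → E}
    {a f : E} {t : ℝ} (hV : HasGradientAt V (T f) (q t)) (hq : HasDerivAt q (v t) t)
    (hv : HasDerivAt v a t) :
    HasDerivAt (fun s ↦ (1 / 2 : ℝ) * ⟪T (v s), v s⟫ + V (q s)) ⟪T (a + f), v t⟫ t := by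
  rw [map_add, inner_add_left]
  exact (hasDerivAt_half_inner_apply_self hT hv).add (hasDerivAt_comp_of_hasGradientAt hV hq)

theorem stmt_1_general {T : E →ₗ[ℝ] E} (hT : T.IsSymmetric) {F : E → E} {V : E → ℝ}
    (hV : Differentiable ℝ V) (hgrad : ∀ x, gradient V x = T (F x)) {q : ℝ → E}
    (hq : Differentiable ℝ q) (hq' : Differentiable ℝ (deriv q))
    (hF : ∀ t, deriv (deriv q) t + F (q t) = 0) (t₁ t₂ : ℝ) :
    (1 / 2 : ℝ) * ⟪T (deriv q t₁), deriv q t₁⟫ + V (q t₁) =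
      (1 / 2 : ℝ) * ⟪T (deriv q t₂), deriv q t₂⟫ + V (q t₂) := by
  have hasDerivAt_zero (t : ℝ) :
      HasDerivAt (fun s ↦ (1 / 2 : ℝ) * ⟪T (deriv q s), deriv q s⟫ + V (q s)) 0 t := by
    have hasGradientAt : HasGradientAt V (T (F (q t))) (q t) :=
      hgrad (q t) ▸ (hV (q t)).hasGradientAt
    simpa only [hF, map_zero, inner_zero_left] using
      hasDerivAt_energy hT hasGradientAt (hq t).hasDerivAt (hq' t).hasDerivAt
  exact is_const_of_deriv_eq_zero (fun t ↦ (hasDerivAt_zero t).differentiableAt)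
    (fun t ↦ (hasDerivAt_zero t).deriv) t₁ t₂

end Hilbert

theorem mulVecE_eq_toEuclideanLin {n : ℕ} (A : Matrix (Fin n) (Fin n) ℝ) :
    mulVecE A = A.toEuclideanLin :=
  rfl

theorem toEuclideanLin_isSymmetric_of_transpose_eq {ι : Type*} [Fintype ι] [DecidableEq ι]
    {A : Matrix ι ι ℝ} (hA : Aᵀ = A) : A.toEuclideanLin.IsSymmetric :=
  isSymmetric_toEuclideanLin_iff.mpr ((conjTranspose_eq_transpose_of_trivial A).trans hA)

theorem stmt_1 (n : ℕ) (A : Matrix (Fin n) (Fin n) ℝ) (hA : Aᵀ = A)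
    (U Ut : EuclideanSpace ℝ (Fin n) → ℝ)
    (hU : Differentiable ℝ U) (hUt : Differentiable ℝ Ut)
    (hgrad : ∀ q, gradient Ut q = mulVecE A (gradient U q))
    (q : ℝ → EuclideanSpace ℝ (Fin n))
    (hq : Differentiable ℝ q) (hq' : Differentiable ℝ (deriv q))
    (hEL : ∀ t, deriv (deriv q) t + gradient U (q t) = 0) :
    ∀ t₁ t₂ : ℝ,
      (1 / 2 : ℝ) * ⟪mulVecE A (deriv q t₁), deriv q t₁⟫ + Ut (q t₁) =
      (1 / 2 : ℝ) * ⟪mulVecE A (deriv q t₂), deriv q t₂⟫ + Ut (q t₂) := by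
  simp only [mulVecE_eq_toEuclideanLin] at hgrad ⊢
  exact stmt_1_general (toEuclideanLin_isSymmetric_of_transpose_eq hA) hUt hgrad hq hq' hEL
end

section
/- Let n be a natural number, let A be a real n×n matrix, let Q be a real orthogonal n×n matrix and λ : Fin n → ℝ be such that Qᵀ·A·Q is the diagonal matrix with diagonal entries λ₁,…,λₙ, and let Ũ : ℝⁿ → ℝ be differentiable. If q : ℝ → ℝⁿ is a twice differentiable curve satisfying A·q''(t) + ∇Ũ(q(t)) = 0 for all t, then the curve x(t) := Qᵀ·q(t) satisfies, for every index k and every t, λₖ · xₖ''(t) + ∂ₖṼ(x(t)) = 0, where Ṽ(x) = Ũ(Q·x) and ∂ₖṼ denotes the partial derivative of Ṽ in the direction of the k-th standard basis vector. -/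
open Matrix

/-- Partial derivative of `f` at `q` in the direction of the `i`-th
standard basis vector. -/
noncomputable def pd {n : ℕ} (f : EuclideanSpace ℝ (Fin n) → ℝ) (i : Fin n)
    (q : EuclideanSpace ℝ (Fin n)) : ℝ :=
  fderiv ℝ f q (EuclideanSpace.single i 1)

/-!
Orthogonality turns `Qᵀ A Q = diag λ` into `Aᵀ (Q eₖ) = λₖ (Q eₖ)`, so each column of `Q` is an
eigenvector of the adjoint of `A`. Pairing the equation of motion with the column `Q eₖ` moves `A`
onto the eigenvector and gives the `k`-th equation, since `xₖ = ⟪Q eₖ, q⟫` and, by the chain rule,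
`∂ₖ(U ∘ Q)(x)` is the derivative of `U` at `Q x = q` in the direction `Q eₖ`.
-/

open Filter Topology
open scoped InnerProductSpace

theorem deriv_deriv_continuousLinearMap_apply {𝕜 E F : Type*} [NontriviallyNormedField 𝕜]
    [NormedAddCommGroup E] [NormedSpace 𝕜 E] [NormedAddCommGroup F] [NormedSpace 𝕜 F]
    (L : E →L[𝕜] F) {q : 𝕜 → E} {t : 𝕜}
    (hq : ∀ᶠ s in 𝓝 t, DifferentiableAt 𝕜 q s) (hq' : DifferentiableAt 𝕜 (deriv q) t) :
    deriv (deriv fun s => L (q s)) t = L (deriv (deriv q) t) := by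
  have velocity : deriv (fun s => L (q s)) =ᶠ[𝓝 t] fun s => L (deriv q s) := by
    filter_upwards [hq] with s hs
    exact (L.hasFDerivAt.comp_hasDerivAt s hs.hasDerivAt).deriv
  rw [velocity.deriv_eq]
  exact (L.hasFDerivAt.comp_hasDerivAt t hq'.hasDerivAt).deriv

theorem modal_equation_of_adjoint_apply_eq_smul {H : Type*} [NormedAddCommGroup H]
    [InnerProductSpace ℝ H] [CompleteSpace H] {A : H →L[ℝ] H} {e : H} {μ : ℝ}
    (he : A.adjoint e = μ • e) {U : H → ℝ} {q : ℝ → H} {t : ℝ}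
    (hq : ∀ᶠ s in 𝓝 t, DifferentiableAt ℝ q s) (hq' : DifferentiableAt ℝ (deriv q) t)
    (hEL : A (deriv (deriv q) t) + gradient U (q t) = 0) :
    μ * deriv (deriv fun s => ⟪e, q s⟫_ℝ) t + fderiv ℝ U (q t) e = 0 := by
  have acceleration : deriv (deriv fun s => ⟪e, q s⟫_ℝ) t = ⟪e, deriv (deriv q) t⟫_ℝ :=
    deriv_deriv_continuousLinearMap_apply (innerSL ℝ e) hq hq'
  calc μ * deriv (deriv fun s => ⟪e, q s⟫_ℝ) t + fderiv ℝ U (q t) e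
      = ⟪μ • e, deriv (deriv q) t⟫_ℝ + ⟪e, gradient U (q t)⟫_ℝ := by
        rw [acceleration, real_inner_smul_left, inner_gradient_right, conj_trivial]
    _ = ⟪e, A (deriv (deriv q) t) + gradient U (q t)⟫_ℝ := by
        rw [← he, ContinuousLinearMap.adjoint_inner_left, inner_add_right]
    _ = 0 := by rw [hEL, inner_zero_right]

section Matrix

variable {ι : Type*} [Fintype ι] [DecidableEq ι]

theorem adjoint_toEuclideanCLM {𝕜 : Type*} [RCLike 𝕜] (A : Matrix ι ι 𝕜) :
    (toEuclideanCLM (𝕜 := 𝕜) A).adjoint = toEuclideanCLM (𝕜 := 𝕜) Aᴴ := by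
  rw [← ContinuousLinearMap.star_eq_adjoint, ← map_star, star_eq_conjTranspose]

theorem transpose_mul_eq_mul_diagonal {R : Type*} [CommSemiring R] {A Q : Matrix ι ι R}
    (hQ : Qᵀ * Q = 1) {lam : ι → R} (hdiag : Qᵀ * A * Q = diagonal lam) :
    Aᵀ * Q = Q * diagonal lam :=
  calc Aᵀ * Q = Q * Qᵀ * Aᵀ * Q := by rw [mul_eq_one_comm.mp hQ, one_mul]
    _ = Q * (Qᵀ * A * Q)ᵀ := by simp only [transpose_mul, transpose_transpose, mul_assoc]
    _ = Q * diagonal lam := by rw [hdiag, diagonal_transpose]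

end Matrix

section MulVecE

variable {n : ℕ}

theorem mulVecE_eq_toEuclideanCLM (A : Matrix (Fin n) (Fin n) ℝ)
    (v : EuclideanSpace ℝ (Fin n)) : mulVecE A v = toEuclideanCLM (𝕜 := ℝ) A v :=
  rfl

theorem mulVecE_mulVecE (A B : Matrix (Fin n) (Fin n) ℝ) (v : EuclideanSpace ℝ (Fin n)) :
    mulVecE A (mulVecE B v) = mulVecE (A * B) v := by
  simp only [mulVecE_eq_toEuclideanCLM, map_mul, mul_apply_eq_comp]

theorem mulVecE_diagonal_single (lam : Fin n → ℝ) (k : Fin n) :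
    mulVecE (diagonal lam) (EuclideanSpace.single k 1) = lam k • EuclideanSpace.single k 1 := by
  ext i
  simp [mulVecE]

theorem mulVecE_mulVecE_transpose {Q : Matrix (Fin n) (Fin n) ℝ} (hQ : Qᵀ * Q = 1)
    (v : EuclideanSpace ℝ (Fin n)) : mulVecE Q (mulVecE Qᵀ v) = v := by
  rw [mulVecE_mulVecE, mul_eq_one_comm.mp hQ, mulVecE_eq_toEuclideanCLM, map_one,
    one_apply_eq_self]

theorem adjoint_toEuclideanCLM_apply (A : Matrix (Fin n) (Fin n) ℝ)
    (v : EuclideanSpace ℝ (Fin n)) :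
    (toEuclideanCLM (𝕜 := ℝ) A).adjoint v = mulVecE Aᵀ v := by
  rw [adjoint_toEuclideanCLM, conjTranspose_eq_transpose_of_trivial, mulVecE_eq_toEuclideanCLM]

theorem mulVecE_transpose_apply (Q : Matrix (Fin n) (Fin n) ℝ)
    (v : EuclideanSpace ℝ (Fin n)) (k : Fin n) :
    mulVecE Qᵀ v k = ⟪mulVecE Q (EuclideanSpace.single k 1), v⟫_ℝ := by
  rw [mulVecE_eq_toEuclideanCLM Q, ← ContinuousLinearMap.adjoint_inner_right,
    adjoint_toEuclideanCLM_apply, EuclideanSpace.inner_single_left, map_one, one_mul]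

theorem pd_comp_mulVecE (Q : Matrix (Fin n) (Fin n) ℝ) {U : EuclideanSpace ℝ (Fin n) → ℝ}
    {x : EuclideanSpace ℝ (Fin n)} (hU : DifferentiableAt ℝ U (mulVecE Q x)) (k : Fin n) :
    pd (fun y => U (mulVecE Q y)) k x
      = fderiv ℝ U (mulVecE Q x) (mulVecE Q (EuclideanSpace.single k 1)) := by
  have chain_rule : HasFDerivAt (fun y => U (mulVecE Q y))
      (fderiv ℝ U (mulVecE Q x) ∘L toEuclideanCLM (𝕜 := ℝ) Q) x :=
    hU.hasFDerivAt.comp x (toEuclideanCLM (𝕜 := ℝ) Q).hasFDerivAt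
  rw [pd, chain_rule.fderiv, ContinuousLinearMap.comp_apply, ← mulVecE_eq_toEuclideanCLM]

theorem mulVecE_transpose_column_eq_smul {A Q : Matrix (Fin n) (Fin n) ℝ} (hQ : Qᵀ * Q = 1)
    {lam : Fin n → ℝ} (hdiag : Qᵀ * A * Q = diagonal lam) (k : Fin n) :
    mulVecE Aᵀ (mulVecE Q (EuclideanSpace.single k 1))
      = lam k • mulVecE Q (EuclideanSpace.single k 1) := by
  rw [mulVecE_mulVecE, transpose_mul_eq_mul_diagonal hQ hdiag, ← mulVecE_mulVecE,
    mulVecE_diagonal_single]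
  simp only [mulVecE_eq_toEuclideanCLM, map_smul]

end MulVecE

theorem stmt_6_general {n : ℕ} {A Q : Matrix (Fin n) (Fin n) ℝ} (hQ : Qᵀ * Q = 1)
    {lam : Fin n → ℝ} (hdiag : Qᵀ * A * Q = diagonal lam)
    {U : EuclideanSpace ℝ (Fin n) → ℝ} {q : ℝ → EuclideanSpace ℝ (Fin n)} {t : ℝ}
    (hU : DifferentiableAt ℝ U (q t)) (hq : ∀ᶠ s in 𝓝 t, DifferentiableAt ℝ q s)
    (hq' : DifferentiableAt ℝ (deriv q) t)
    (hEL : mulVecE A (deriv (deriv q) t) + gradient U (q t) = 0) (k : Fin n) :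
    lam k * deriv (deriv fun s => mulVecE Qᵀ (q s) k) t
      + pd (fun x => U (mulVecE Q x)) k (mulVecE Qᵀ (q t)) = 0 := by
  have hQq : mulVecE Q (mulVecE Qᵀ (q t)) = q t := mulVecE_mulVecE_transpose hQ (q t)
  have column_eigenvector := (adjoint_toEuclideanCLM_apply A _).trans
    (mulVecE_transpose_column_eq_smul hQ hdiag k)
  rw [pd_comp_mulVecE Q (hQq.symm ▸ hU), hQq]
  simp only [mulVecE_transpose_apply]
  exact modal_equation_of_adjoint_apply_eq_smul column_eigenvector hq hq' hEL

theorem stmt_6 (n : ℕ) (A Q : Matrix (Fin n) (Fin n) ℝ) (hQ : Qᵀ * Q = 1)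
    (lam : Fin n → ℝ) (hdiag : Qᵀ * A * Q = Matrix.diagonal lam)
    (Ut : EuclideanSpace ℝ (Fin n) → ℝ) (hUt : Differentiable ℝ Ut)
    (q : ℝ → EuclideanSpace ℝ (Fin n))
    (hq : Differentiable ℝ q) (hq' : Differentiable ℝ (deriv q))
    (hEL : ∀ t, mulVecE A (deriv (deriv q) t) + gradient Ut (q t) = 0)
    (k : Fin n) (t : ℝ) :
    lam k * deriv (deriv (fun s => mulVecE Qᵀ (q s) k)) t
      + pd (fun x => Ut (mulVecE Q x)) k (mulVecE Qᵀ (q t)) = 0 :=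
  stmt_6_general hQ hdiag (hUt (q t)) (.of_forall hq) (hq' t) (hEL t) k
end

section
/- Let m ≥ 1 be a natural number, let w : Fin m → ℝ, let μ, d ∈ ℝ, and let A be the (m+1)×(m+1) real block matrix with upper-left block d·I_m, upper-right block the column vector μ·w, lower-left block the row vector μ·wᵀ, and lower-right entry d. Then for every z ∈ ℝ, det(A − z·1) = (d − z)^(m−1) · ((d − z)² − μ²·‖w‖²), where ‖w‖² = ∑ᵢ wᵢ². -/
open Matrix

/-!
Cauchy's formula expands the determinant of a bordered matrix as
`det [A, u; vᵀ, e] = e * det A - vᵀ * adj A * u` over any commutative ring. When `det A` can be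
cancelled, it follows from right multiplication by the block triangular matrix
`[1, -adj A * u; 0, det A]`; the general case is a specialization of the case of `X + A` over
`R[X]`, whose determinant is monic. For the scalar matrix `A = t`, one has `adj A = t ^ (n - 1)`.
-/

section BorderedDeterminant

variable {R n ι : Type*} [CommRing R] [Fintype n] [DecidableEq n] [Fintype ι] [DecidableEq ι]

theorem det_fromBlocks_mul_det_pow_card (A : Matrix n n R) (B : Matrix n ι R) (C : Matrix ι n R)
    (D : Matrix ι ι R) :
    (fromBlocks A B C D).det * A.det ^ Fintype.card ι
      = A.det * (A.det • D - C * A.adjugate * B).det := by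
  have column_elimination :
      fromBlocks A B C D * fromBlocks 1 (-(A.adjugate * B)) 0 (A.det • 1)
        = fromBlocks A 0 C (A.det • D - C * A.adjugate * B) := by
    rw [fromBlocks_multiply, Matrix.mul_neg, Matrix.mul_neg, ← Matrix.mul_assoc,
      ← Matrix.mul_assoc, mul_adjugate]
    simp [neg_add_eq_sub]
  simpa [det_fromBlocks_zero₁₂, det_fromBlocks_zero₂₁] using congrArg det column_elimination

theorem map_dotProduct_adjugate_mulVec {S : Type*} [CommRing S] (f : R →+* S) (A : Matrix n n R)
    (u v : n → R) :
    f (v ⬝ᵥ A.adjugate *ᵥ u) = (f ∘ v) ⬝ᵥ (f.mapMatrix A).adjugate *ᵥ (f ∘ u) := by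
  have map_adjugate_mulVec :
      f ∘ (A.adjugate *ᵥ u) = (f.mapMatrix A).adjugate *ᵥ (f ∘ u) := by
    rw [← RingHom.map_adjugate]
    exact funext (f.map_mulVec A.adjugate u)
  rw [RingHom.map_dotProduct, map_adjugate_mulVec]

theorem eval_zero_mapMatrix_charmatrix_neg (A : Matrix n n R) :
    (Polynomial.evalRingHom 0).mapMatrix (charmatrix (-A)) = A := by
  ext i j
  by_cases hij : i = j <;> simp [hij]

variable [Unique ι]

theorem det_fromBlocks_replicateCol_replicateRow_of_isRegular {A : Matrix n n R}
    (hA : IsRegular A.det) (u v : n → R) (D : Matrix ι ι R) :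
    (fromBlocks A (replicateCol ι u) (replicateRow ι v) D).det
      = A.det * D.det - v ⬝ᵥ A.adjugate *ᵥ u := by
  have schur_complement :
      (A.det • D - replicateRow ι v * A.adjugate * replicateCol ι u).det
        = A.det * D.det - v ⬝ᵥ A.adjugate *ᵥ u := by
    rw [Matrix.mul_assoc, ← replicateCol_mulVec, det_unique (n := ι), det_unique D,
      Matrix.sub_apply, Matrix.smul_apply, smul_eq_mul, replicateRow_mul_replicateCol_apply]
  apply hA.left
  have cleared := det_fromBlocks_mul_det_pow_card A (replicateCol ι u) (replicateRow ι v) D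
  rwa [schur_complement, Fintype.card_unique, pow_one, mul_comm] at cleared

theorem det_fromBlocks_replicateCol_replicateRow (A : Matrix n n R) (u v : n → R)
    (D : Matrix ι ι R) :
    (fromBlocks A (replicateCol ι u) (replicateRow ι v) D).det
      = A.det * D.det - v ⬝ᵥ A.adjugate *ᵥ u := by
  let ev : Polynomial R →+* R := Polynomial.evalRingHom 0
  have ev_C (x : R) : ev (Polynomial.C x) = x := Polynomial.eval_C
  have ev_comp_C (x : n → R) : ev ∘ Polynomial.C ∘ x = x := funext fun _ => ev_C _
  have ev_charmatrix : ev.mapMatrix (charmatrix (-A)) = A := eval_zero_mapMatrix_charmatrix_neg A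
  have ev_D : ev.mapMatrix (D.map Polynomial.C) = D := by ext; exact ev_C _
  have ev_bordered :
      ev.mapMatrix (fromBlocks (charmatrix (-A)) (replicateCol ι (Polynomial.C ∘ u))
        (replicateRow ι (Polynomial.C ∘ v)) (D.map Polynomial.C))
        = fromBlocks A (replicateCol ι u) (replicateRow ι v) D := by
    rw [RingHom.mapMatrix_apply, fromBlocks_map]
    congr 1
    all_goals ext; exact ev_C _
  have ev_bilinear :
      ev ((Polynomial.C ∘ v) ⬝ᵥ (charmatrix (-A)).adjugate *ᵥ (Polynomial.C ∘ u))
        = v ⬝ᵥ A.adjugate *ᵥ u := by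
    rw [map_dotProduct_adjugate_mulVec, ev_charmatrix, ev_comp_C, ev_comp_C]
  have lifted := congrArg ev <|
    det_fromBlocks_replicateCol_replicateRow_of_isRegular (ι := ι)
      (charpoly_monic (-A)).isRegular (Polynomial.C ∘ u) (Polynomial.C ∘ v) (D.map Polynomial.C)
  rwa [map_sub, map_mul, RingHom.map_det, RingHom.map_det, RingHom.map_det, ev_bordered,
    ev_charmatrix, ev_D, ev_bilinear] at lifted

theorem det_fromBlocks_smul_one_replicateCol_replicateRow [Nonempty n] (t : R) (u v : n → R)
    (D : Matrix ι ι R) :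
    (fromBlocks (t • 1) (replicateCol ι u) (replicateRow ι v) D).det
      = t ^ (Fintype.card n - 1) * (t * D.det - v ⬝ᵥ u) := by
  rw [det_fromBlocks_replicateCol_replicateRow, adjugate_smul, adjugate_one, smul_mulVec,
    one_mulVec, dotProduct_smul, smul_eq_mul, det_smul, det_one,
    ← pow_sub_one_mul Fintype.card_ne_zero t]
  ring

theorem stmt_16_general [Nonempty n] (u v : n → R) (d e z : R) :
    (fromBlocks (d • 1) (replicateCol ι u) (replicateRow ι v) (e • 1) - z • 1).det
      = (d - z) ^ (Fintype.card n - 1) * ((d - z) * (e - z) - v ⬝ᵥ u) := by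
  have shifted : fromBlocks (d • 1) (replicateCol ι u) (replicateRow ι v) (e • 1) - z • 1
      = fromBlocks ((d - z) • 1) (replicateCol ι u) (replicateRow ι v) ((e - z) • 1) := by
    rw [← fromBlocks_one, fromBlocks_smul, sub_eq_add_neg, fromBlocks_neg, fromBlocks_add]
    simp [sub_smul, ← sub_eq_add_neg]
  rw [shifted, det_fromBlocks_smul_one_replicateCol_replicateRow, det_smul, det_one,
    Fintype.card_unique (α := ι), pow_one, mul_one]

end BorderedDeterminant

theorem stmt_16 (m : ℕ) (hm : 1 ≤ m) (w : Fin m → ℝ) (μ d : ℝ)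
    (A : Matrix (Fin m ⊕ Fin 1) (Fin m ⊕ Fin 1) ℝ)
    (hA : A = Matrix.fromBlocks (d • 1) (Matrix.of fun i _ => μ * w i)
      (Matrix.of fun _ j => μ * w j) (d • 1)) :
    ∀ z : ℝ, (A - z • 1).det
      = (d - z) ^ (m - 1) * ((d - z) ^ 2 - μ ^ 2 * ∑ i, (w i) ^ 2) := by
  intro z
  have : Nonempty (Fin m) := Fin.pos_iff_nonempty.mp hm
  simpa [hA, dotProduct, replicateCol, replicateRow, Finset.mul_sum, mul_pow, ← sq] using
    stmt_16_general (ι := Fin 1) (fun i => μ * w i) (fun i => μ * w i) d d z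
end

section
/- Let n be a natural number, let A be a real n×n matrix, let fⱼ : ℝ → ℝ (j = 1,…,n) be twice differentiable functions, and let Ũ : ℝⁿ → ℝ be twice continuously differentiable with ∂ᵢŨ(q) = ∑ⱼ Aᵢⱼ · fⱼ'(qⱼ) for all q ∈ ℝⁿ and all i. Then for all indices i ≠ k and all q ∈ ℝⁿ, Aᵢₖ · fₖ''(qₖ) = Aₖᵢ · fᵢ''(qᵢ). -/
section SeparatedVariables

open scoped Topology

variable {𝕜 ι F : Type*} [RCLike 𝕜] [Fintype ι] [DecidableEq ι]
  [NormedAddCommGroup F] [NormedSpace 𝕜 F]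

theorem hasDerivAt_of_hasFDerivAt_sum_coord {g : ι → 𝕜 → F} {q : EuclideanSpace 𝕜 ι}
    {L : EuclideanSpace 𝕜 ι →L[𝕜] F} (hg : HasFDerivAt (fun x ↦ ∑ j, g j (x j)) L q) (k : ι) :
    HasDerivAt (g k) (L (EuclideanSpace.single k 1)) (q k) := by
  -- Along the line through `q` in direction `k`, only the `k`-th summand varies.
  let line : 𝕜 → EuclideanSpace 𝕜 ι := fun t ↦ q + (t - q k) • EuclideanSpace.single k 1
  have hline : HasDerivAt line (EuclideanSpace.single k 1) (q k) := by
    simpa only [one_smul] using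
      (((hasDerivAt_id' (q k)).sub_const (q k)).smul_const (EuclideanSpace.single k 1)).const_add q
  have line_at : line (q k) = q := by simp [line]
  have sum_line (t : 𝕜) :
      ∑ j, g j (line t j) = g k t + ∑ j ∈ Finset.univ.erase k, g j (q j) := by
    rw [← Finset.add_sum_erase _ _ (Finset.mem_univ k)]
    congr 1
    · simp [line]
    · refine Finset.sum_congr rfl fun j hj ↦ ?_
      simp [line, Finset.ne_of_mem_erase hj]
  have hcomp := hg.comp_hasDerivAt_of_eq (q k) hline line_at.symm
  simp only [Function.comp_def, sum_line] at hcomp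
  exact (hasDerivAt_add_const_iff _).mp hcomp

theorem hasDerivAt_of_partial_eventuallyEq_sum {U : EuclideanSpace 𝕜 ι → F}
    {q : EuclideanSpace 𝕜 ι} (hU : DifferentiableAt 𝕜 (fderiv 𝕜 U) q) {i : ι} {g : ι → 𝕜 → F}
    (hpartial : (fun x ↦ fderiv 𝕜 U x (EuclideanSpace.single i 1)) =ᶠ[𝓝 q]
      fun x ↦ ∑ j, g j (x j)) (k : ι) :
    HasDerivAt (g k)
      (fderiv 𝕜 (fderiv 𝕜 U) q (EuclideanSpace.single k 1) (EuclideanSpace.single i 1)) (q k) := by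
  have hpartial' : HasFDerivAt (fun x ↦ fderiv 𝕜 U x (EuclideanSpace.single i 1))
      ((fderiv 𝕜 (fderiv 𝕜 U) q).flip (EuclideanSpace.single i 1)) q := by
    simpa using hU.hasFDerivAt.clm_apply (hasFDerivAt_const (EuclideanSpace.single i 1) q)
  exact hasDerivAt_of_hasFDerivAt_sum_coord (hpartial'.congr_of_eventuallyEq hpartial.symm) k

/-- Both derivatives exist by `hasDerivAt_of_partial_eventuallyEq_sum`, so neither side is a junk
value of `deriv`. -/
theorem stmt_18_general {U : EuclideanSpace 𝕜 ι → F} {q : EuclideanSpace 𝕜 ι}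
    (hU : ContDiffAt 𝕜 2 U q) {φ : ι → ι → 𝕜 → F}
    (hpartial : ∀ i, (fun x ↦ fderiv 𝕜 U x (EuclideanSpace.single i 1)) =ᶠ[𝓝 q]
      fun x ↦ ∑ j, φ i j (x j)) (i k : ι) :
    deriv (φ i k) (q k) = deriv (φ k i) (q i) := by
  have hU' : DifferentiableAt 𝕜 (fderiv 𝕜 U) q :=
    (hU.fderiv_right (m := 1) (by norm_num)).differentiableAt (by norm_num)
  have hsymm : IsSymmSndFDerivAt 𝕜 U q := hU.isSymmSndFDerivAt (by simp)
  rw [(hasDerivAt_of_partial_eventuallyEq_sum hU' (hpartial i) k).deriv,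
    (hasDerivAt_of_partial_eventuallyEq_sum hU' (hpartial k) i).deriv, hsymm.eq]

end SeparatedVariables

theorem stmt_18 (n : ℕ) (A : Matrix (Fin n) (Fin n) ℝ)
    (f : Fin n → ℝ → ℝ)
    (hf : ∀ j, Differentiable ℝ (f j)) (hf' : ∀ j, Differentiable ℝ (deriv (f j)))
    (Ut : EuclideanSpace ℝ (Fin n) → ℝ) (hUt : ContDiff ℝ 2 Ut)
    (hpd : ∀ (q : EuclideanSpace ℝ (Fin n)) (i : Fin n),
      pd Ut i q = ∑ j, A i j * deriv (f j) (q j)) :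
    ∀ (i k : Fin n), i ≠ k → ∀ q : EuclideanSpace ℝ (Fin n),
      A i k * deriv (deriv (f k)) (q k) = A k i * deriv (deriv (f i)) (q i) := by
  intro i k _ q
  simpa only [deriv_const_mul_field] using
    stmt_18_general hUt.contDiffAt (φ := fun i j t ↦ A i j * deriv (f j) t)
      (fun i ↦ .of_forall (hpd · i)) i k
end

section
/- Let n be a natural number, let A be a real n×n matrix, let fⱼ : ℝ → ℝ (j = 1,…,n) be twice differentiable functions, and let Ũ : ℝⁿ → ℝ be twice continuously differentiable with ∂ᵢŨ(q) = ∑ⱼ Aᵢⱼ · fⱼ'(qⱼ) for all q ∈ ℝⁿ and all i. If for some index k there exists an index i ≠ k with Aᵢₖ ≠ 0, then fₖ'' is constant; equivalently, there exist real constants α and β such that fₖ'(x) = 2αx + β for all x ∈ ℝ. -/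
/-!
The mixed difference `U (q + s eₖ + t eᵢ) - U (q + s eₖ) - U (q + t eᵢ) + U q` can be computed in
two ways. Its derivative in `s` is an increment of `∂ₖU` in the direction `eᵢ`, which involves only
the `i`-th summand of `∂ₖU` and hence does not depend on `s`; so the mixed difference is linear
in `s`. By symmetry it also equals `t` times the increment of the `k`-th summand of `∂ᵢU` over a
step `s`. Taking `t = 1` shows that this summand is affine.
-/

section LineDeriv

variable {𝕜 E F : Type*} [RCLike 𝕜] [AddCommGroup E] [Module 𝕜 E]
  [NormedAddCommGroup F] [NormedSpace 𝕜 F]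

theorem eq_smul_add_of_hasDerivAt_const {φ : 𝕜 → F} {c : F} (hφ : ∀ x, HasDerivAt φ c x) (x : 𝕜) :
    φ x = x • c + φ 0 := by
  have hderiv (y : 𝕜) : HasDerivAt (fun z ↦ φ z - z • c) 0 y := by
    simpa using (hφ y).fun_sub ((hasDerivAt_id y).smul_const c)
  have hconst : φ x - x • c = φ 0 - (0 : 𝕜) • c :=
    is_const_of_deriv_eq_zero (fun y ↦ (hderiv y).differentiableAt) (fun y ↦ (hderiv y).deriv) x 0
  rw [zero_smul, sub_zero] at hconst
  rw [← hconst, add_sub_cancel]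

theorem hasDerivAt_comp_line_of_hasLineDerivAt {U : E → F} {U' : F} {x v : E} {s : 𝕜}
    (hU : HasLineDerivAt 𝕜 U U' (x + s • v) v) :
    HasDerivAt (fun r : 𝕜 ↦ U (x + r • v)) U' s := by
  have hshift : HasDerivAt (fun r : 𝕜 ↦ U (x + s • v + r • v)) U' (-s + s) := by
    rwa [neg_add_cancel]
  refine (hshift.comp_const_add (-s) s).congr_of_eventuallyEq (.of_forall fun r ↦ congrArg U ?_)
  module

variable {U Dv Dw : E → F} {v w : E}

theorem sub_sub_sub_eq_smul_of_lineDeriv_sub_eq (hv : ∀ y, HasLineDerivAt 𝕜 U (Dv y) y v)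
    {x y : E} {c : F} (hc : ∀ s : 𝕜, Dv (y + s • v) - Dv (x + s • v) = c) (s : 𝕜) :
    U (y + s • v) - U (x + s • v) - (U y - U x) = s • c := by
  have hderiv (r : 𝕜) : HasDerivAt (fun s : 𝕜 ↦ U (y + s • v) - U (x + s • v)) c r := by
    rw [← hc r]
    exact (hasDerivAt_comp_line_of_hasLineDerivAt (hv _)).fun_sub
      (hasDerivAt_comp_line_of_hasLineDerivAt (hv _))
  simpa [sub_eq_iff_eq_add] using eq_smul_add_of_hasDerivAt_const hderiv s

theorem smul_lineDeriv_sub_comm (hv : ∀ y, HasLineDerivAt 𝕜 U (Dv y) y v)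
    (hw : ∀ y, HasLineDerivAt 𝕜 U (Dw y) y w) {x : E} {s t : 𝕜} {a b : F}
    (ha : ∀ r : 𝕜, Dv (x + t • w + r • v) - Dv (x + r • v) = a)
    (hb : ∀ r : 𝕜, Dw (x + s • v + r • w) - Dw (x + r • w) = b) :
    s • a = t • b := by
  rw [← sub_sub_sub_eq_smul_of_lineDeriv_sub_eq hv ha s,
    ← sub_sub_sub_eq_smul_of_lineDeriv_sub_eq hw hb t, add_right_comm x (t • w)]
  abel

end LineDeriv

section Separable

variable {𝕜 ι F : Type*} [RCLike 𝕜] [Fintype ι] [DecidableEq ι]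

theorem sum_apply_add_smul_single_sub_sum [AddCommGroup F] (h : ι → 𝕜 → F)
    (q : EuclideanSpace 𝕜 ι) (t : 𝕜) (m : ι) :
    ∑ j, h j ((q + t • EuclideanSpace.single m (1 : 𝕜)) j) - ∑ j, h j (q j) =
      h m (q m + t) - h m (q m) := by
  rw [← Finset.sum_sub_distrib, Finset.sum_eq_single m]
  · simp
  · intro j _ hjm
    simp [hjm]
  · simp

variable [NormedAddCommGroup F] [NormedSpace 𝕜 F] {U : EuclideanSpace 𝕜 ι → F}

theorem exists_eq_smul_add_of_hasLineDerivAt_eq_sum {i k : ι} (hik : i ≠ k) {p r : ι → 𝕜 → F}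
    (hi : ∀ q, HasLineDerivAt 𝕜 U (∑ j, p j (q j)) q (EuclideanSpace.single i 1))
    (hk : ∀ q, HasLineDerivAt 𝕜 U (∑ j, r j (q j)) q (EuclideanSpace.single k 1)) :
    ∃ a b : F, ∀ x, p k x = x • a + b := by
  refine ⟨r i 1 - r i 0, p k 0, fun x ↦ ?_⟩
  have hcomm : x • (r i 1 - r i 0) = (1 : 𝕜) • (p k x - p k 0) := by
    refine smul_lineDeriv_sub_comm hk hi (x := 0) (fun s ↦ ?_) (fun t ↦ ?_)
    · rw [add_right_comm, sum_apply_add_smul_single_sub_sum]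
      simp [hik]
    · rw [add_right_comm, sum_apply_add_smul_single_sub_sum]
      simp [hik.symm]
  rw [hcomm, one_smul, sub_add_cancel]

theorem stmt_19_general (A : Matrix ι ι 𝕜) (g : ι → 𝕜 → F)
    (hU : ∀ q i, HasLineDerivAt 𝕜 U (∑ j, A i j • g j (q j)) q (EuclideanSpace.single i 1))
    (k : ι) (hk : ∃ i, i ≠ k ∧ A i k ≠ 0) :
    ∃ a b : F, ∀ x, g k x = x • a + b := by
  obtain ⟨i, hik, hA⟩ := hk
  obtain ⟨a, b, hab⟩ := exists_eq_smul_add_of_hasLineDerivAt_eq_sum hik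
    (p := fun j x ↦ A i j • g j x) (r := fun j x ↦ A k j • g j x) (hU · i) (hU · k)
  refine ⟨(A i k)⁻¹ • a, (A i k)⁻¹ • b, fun x ↦ ?_⟩
  rw [smul_comm x, ← smul_add, ← hab, inv_smul_smul₀ hA]

end Separable

theorem hasLineDerivAt_pd {n : ℕ} {U : EuclideanSpace ℝ (Fin n) → ℝ}
    {q : EuclideanSpace ℝ (Fin n)} (hU : DifferentiableAt ℝ U q) (i : Fin n) :
    HasLineDerivAt ℝ U (pd U i q) q (EuclideanSpace.single i 1) :=
  hU.hasFDerivAt.hasLineDerivAt _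

theorem stmt_19 (n : ℕ) (A : Matrix (Fin n) (Fin n) ℝ)
    (f : Fin n → ℝ → ℝ)
    (hf : ∀ j, Differentiable ℝ (f j)) (hf' : ∀ j, Differentiable ℝ (deriv (f j)))
    (Ut : EuclideanSpace ℝ (Fin n) → ℝ) (hUt : ContDiff ℝ 2 Ut)
    (hpd : ∀ (q : EuclideanSpace ℝ (Fin n)) (i : Fin n),
      pd Ut i q = ∑ j, A i j * deriv (f j) (q j))
    (k : Fin n) (hk : ∃ i : Fin n, i ≠ k ∧ A i k ≠ 0) :
    ∃ α β : ℝ, ∀ x : ℝ, deriv (f k) x = 2 * α * x + β := by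
  obtain ⟨a, b, hab⟩ := stmt_19_general A (fun j ↦ deriv (f j))
    (fun q i ↦ hpd q i ▸ hasLineDerivAt_pd (hUt.differentiable two_ne_zero q) i) k hk
  exact ⟨a / 2, b, fun x ↦ by rw [hab, smul_eq_mul]; ring⟩
end
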